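/- Let 1 ≤ d ≤ r−2 and let V ∈ Gr_{d,r}. Then the representation X_V has constant (d+1)-socle rank but does not have constant d-socle rank. In particular, Hom(X_U, X_V) = 0 for every U ∈ Gr_{d+1,r}, while dim_k Hom(X_W, X_V) is not independent of W ∈ Gr_{d,r}. -/

import Mathlib

open Module LinearMap

universe u

/-- A finite-dimensional representation of the `r`-Kronecker quiver `Γ_r` over `k`:
two finite-dimensional `k`-vector spaces `M₁`, `M₂` and `r` linear maps `M₁ → M₂`. -/
structure KRep (k : Type u) [Field k] (r : ℕ) : Type (u + 1) where
  V1 : Type u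
  V2 : Type u
  [addV1 : AddCommGroup V1]
  [addV2 : AddCommGroup V2]
  [modV1 : Module k V1]
  [modV2 : Module k V2]
  [finV1 : FiniteDimensional k V1]
  [finV2 : FiniteDimensional k V2]
  f : Fin r → V1 →ₗ[k] V2

attribute [instance] KRep.addV1 KRep.addV2 KRep.modV1 KRep.modV2 KRep.finV1 KRep.finV2

variable {k : Type u} [Field k] {r : ℕ}

/-- For `α ∈ k^r`, the operator `x^M_α = ∑ i, αᵢ • M(γᵢ) : M₁ → M₂`. -/
def KRep.x (M : KRep k r) (α : Fin r → k) : M.V1 →ₗ[k] M.V2 :=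
  ∑ i, α i • M.f i

/-- The space `Hom(M, N)` of morphisms of representations, as a `k`-submodule of the
pairs of linear maps `(f₁ : M₁ → N₁, f₂ : M₂ → N₂)`; membership is the condition
`f₂ ∘ M(γᵢ) = N(γᵢ) ∘ f₁` for all `i`. -/
def KHom (M N : KRep k r) : Submodule k ((M.V1 →ₗ[k] N.V1) × (M.V2 →ₗ[k] N.V2)) where
  carrier := {p | ∀ i, p.2 ∘ₗ M.f i = N.f i ∘ₗ p.1}
  add_mem' := by
    intro a b ha hb i
    simp only [Prod.snd_add, Prod.fst_add, LinearMap.add_comp, LinearMap.comp_add, ha i, hb i]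
  zero_mem' := by intro i; simp
  smul_mem' := by
    intro c a ha i
    simp only [Prod.smul_snd, Prod.smul_fst, LinearMap.smul_comp, LinearMap.comp_smul, ha i]

/-- The representation `X_U` attached to a subspace `U ⊆ k^r`:
`(X_U)₁ = k`, `(X_U)₂ = k^r/U`, and `X_U(γᵢ)(c) = c · (eᵢ + U)`. -/
def XU (U : Submodule k (Fin r → k)) : KRep k r where
  V1 := k
  V2 := (Fin r → k) ⧸ U
  f := fun i => LinearMap.toSpanSingleton k _ (Submodule.Quotient.mk (Pi.single i 1))

/-- The `M₁`-part of the socle: `{m ∈ M₁ : x^M_u(m) = 0 for all u ∈ U}`. -/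
def KRep.socKer (M : KRep k r) (U : Submodule k (Fin r → k)) : Submodule k M.V1 :=
  ⨅ u ∈ U, LinearMap.ker (M.x u)

/-- `Soc_U(M) = {m ∈ M₁ : x^M_u(m) = 0 ∀ u ∈ U} ⊕ M₂`, as a subspace of `M₁ ⊕ M₂`. -/
def KRep.soc (M : KRep k r) (U : Submodule k (Fin r → k)) : Submodule k (M.V1 × M.V2) :=
  (M.socKer U).prod ⊤

/-- `Rad_U(M) = ∑_{u ∈ U} x^M_u(M₁) ⊆ M₂`. -/
def KRep.rad (M : KRep k r) (U : Submodule k (Fin r → k)) : Submodule k M.V2 :=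
  ⨆ u ∈ U, LinearMap.range (M.x u)

/-- Direct sum of two representations. -/
def KRep.sum (M N : KRep k r) : KRep k r where
  V1 := M.V1 × N.V1
  V2 := M.V2 × N.V2
  f := fun i => (M.f i).prodMap (N.f i)

/-- Isomorphism of representations. -/
def KIso (M N : KRep k r) : Prop :=
  ∃ (e1 : M.V1 ≃ₗ[k] N.V1) (e2 : M.V2 ≃ₗ[k] N.V2),
    ∀ i, (e2 : M.V2 →ₗ[k] N.V2) ∘ₗ M.f i = N.f i ∘ₗ (e1 : M.V1 →ₗ[k] N.V1)

/-- A representation is nonzero if its dimension vector is not `(0,0)`. -/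
def KRep.Nonzero (M : KRep k r) : Prop :=
  finrank k M.V1 ≠ 0 ∨ finrank k M.V2 ≠ 0

/-- A representation is indecomposable if it is nonzero and not isomorphic to a direct
sum of two nonzero representations. -/
def KRep.Indecomposable (M : KRep k r) : Prop :=
  M.Nonzero ∧ ∀ A B : KRep k r, A.Nonzero → B.Nonzero → ¬ KIso M (A.sum B)

/-- A representation is simple if its dimension vector is `(1,0)` or `(0,1)`. -/
def KRep.IsSimple (M : KRep k r) : Prop :=
  (finrank k M.V1 = 1 ∧ finrank k M.V2 = 0) ∨ (finrank k M.V1 = 0 ∧ finrank k M.V2 = 1)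

/-- `M` has constant `d`-socle rank: `dim_k Soc_U(M)` is independent of `U ∈ Gr_{d,r}`. -/
def KRep.ConstSocRank (d : ℕ) (M : KRep k r) : Prop :=
  ∃ c : ℕ, ∀ U : Submodule k (Fin r → k), finrank k U = d → finrank k (M.soc U) = c

/-- `M` has the equal `d`-socle property: `Soc_U(M)` is independent of `U ∈ Gr_{d,r}`. -/
def KRep.ESP (d : ℕ) (M : KRep k r) : Prop :=
  ∀ U V : Submodule k (Fin r → k), finrank k U = d → finrank k V = d → M.soc U = M.soc V

/-- `M` has constant `d`-radical rank: `dim_k Rad_U(M)` is independent of `U ∈ Gr_{d,r}`. -/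
def KRep.ConstRadRank (d : ℕ) (M : KRep k r) : Prop :=
  ∃ c : ℕ, ∀ U : Submodule k (Fin r → k), finrank k U = d → finrank k (M.rad U) = c

/-- `M` has the equal `d`-radical property: `Rad_U(M)` is independent of `U ∈ Gr_{d,r}`. -/
def KRep.ERP (d : ℕ) (M : KRep k r) : Prop :=
  ∀ U V : Submodule k (Fin r → k), finrank k U = d → finrank k V = d → M.rad U = M.rad V

/-!
A morphism `X_U → M` is determined by the image `m ∈ M₁` of the generator `1 ∈ k = (X_U)₁`, and `m`
can be any vector killed by all `x_u`, `u ∈ U`; hence `dim Soc_U(M) = dim Hom(X_U, M) + dim M₂`.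
For `M = X_V` the vectors killed by `U` are all of `k` if `U ≤ V` and `0` otherwise. A subspace of
dimension greater than `dim V` is never contained in `V`, while in each dimension between `1` and
`dim V < r` there are subspaces of `k^r` of both kinds.
-/

section Subspaces

variable {K E F : Type*} [DivisionRing K]
  [AddCommGroup E] [Module K E] [AddCommGroup F] [Module K F]

theorem finrank_submodule_prod (P : Submodule K E) (Q : Submodule K F)
    [FiniteDimensional K P] [FiniteDimensional K Q] :
    finrank K (P.prod Q) = finrank K P + finrank K Q := by
  have hrange : range (P.subtype.prodMap Q.subtype) = P.prod Q := by
    rw [range_prodMap, P.range_subtype, Q.range_subtype]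
  have hinj : Function.Injective (P.subtype.prodMap Q.subtype) :=
    P.injective_subtype.prodMap Q.injective_subtype
  rw [← hrange, finrank_range_of_inj hinj, finrank_prod]

theorem not_le_of_finrank_lt {P Q : Submodule K E} [FiniteDimensional K Q]
    (h : finrank K Q < finrank K P) : ¬ P ≤ Q :=
  fun hPQ => (Submodule.finrank_mono hPQ).not_gt h

theorem exists_submodule_finrank_eq_of_le [FiniteDimensional K E] {P Q : Submodule K E}
    (hPQ : P ≤ Q) {n : ℕ} (hPn : finrank K P ≤ n) (hnQ : n ≤ finrank K Q) :
    ∃ W : Submodule K E, P ≤ W ∧ W ≤ Q ∧ finrank K W = n := by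
  induction n, hPn using Nat.le_induction with
  | base => exact ⟨P, le_rfl, hPQ, rfl⟩
  | succ n _ ih =>
    obtain ⟨W, hPW, hWQ, rfl⟩ := ih (Nat.le_of_succ_le hnQ)
    obtain ⟨v, hvQ, hvW⟩ := SetLike.not_le_iff_exists.1 (not_le_of_finrank_lt hnQ)
    exact ⟨W ⊔ K ∙ v, le_sup_of_le_left hPW,
      sup_le hWQ ((Submodule.span_singleton_le_iff_mem v Q).2 hvQ),
      Submodule.finrank_sup_span_singleton hvW⟩

theorem exists_submodule_finrank_eq_not_le [FiniteDimensional K E] {V : Submodule K E}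
    (hV : V ≠ ⊤) {n : ℕ} (hn : 1 ≤ n) (hnE : n ≤ finrank K E) :
    ∃ W : Submodule K E, finrank K W = n ∧ ¬ W ≤ V := by
  obtain ⟨v, -, hv⟩ := SetLike.exists_of_lt hV.lt_top
  have hv0 : v ≠ 0 := fun h => hv (h ▸ V.zero_mem)
  obtain ⟨W, hvW, -, hW⟩ := exists_submodule_finrank_eq_of_le (le_top : K ∙ v ≤ ⊤)
    ((finrank_span_singleton hv0).trans_le hn) (hnE.trans_eq (finrank_top K E).symm)
  exact ⟨W, hW, fun h => hv (h (hvW (Submodule.mem_span_singleton_self v)))⟩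

end Subspaces

namespace KRep

variable {M N : KRep k r}

/-- For a vector `m ∈ M₁`, the linear map `k^r → M₂` sending `α` to `x^M_α(m)`. It turns the
condition that `m` lies in the `U`-socle into an inclusion `U ≤ ker`. -/
def evalX (M : KRep k r) (m : M.V1) : (Fin r → k) →ₗ[k] M.V2 :=
  Fintype.linearCombination k fun i => M.f i m

theorem evalX_apply (m : M.V1) (α : Fin r → k) : M.evalX m α = M.x α m := by
  simp [evalX, x, Fintype.linearCombination_apply, LinearMap.sum_apply]

theorem evalX_single (m : M.V1) (i : Fin r) : M.evalX m (Pi.single i 1) = M.f i m := by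
  simp [evalX]

theorem evalX_smul (c : k) (m : M.V1) : M.evalX (c • m) = c • M.evalX m :=
  LinearMap.ext fun α => by simp [evalX_apply]

theorem mem_KHom_iff {p : (M.V1 →ₗ[k] N.V1) × (M.V2 →ₗ[k] N.V2)} :
    p ∈ KHom M N ↔ ∀ m, p.2 ∘ₗ M.evalX m = N.evalX (p.1 m) := by
  constructor
  · refine fun hp m => pi_ext' fun i => LinearMap.ext_ring ?_
    simpa [evalX_single] using LinearMap.congr_fun (hp i) m
  · refine fun hp i => LinearMap.ext fun m => ?_
    simpa [evalX_single] using LinearMap.congr_fun (hp m) (Pi.single i 1)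

theorem mem_socKer_iff_le_ker_evalX {U : Submodule k (Fin r → k)} {m : M.V1} :
    m ∈ M.socKer U ↔ U ≤ ker (M.evalX m) := by
  simp [socKer, SetLike.le_def, evalX_apply]

theorem finrank_soc (M : KRep k r) (U : Submodule k (Fin r → k)) :
    finrank k (M.soc U) = finrank k (M.socKer U) + finrank k M.V2 := by
  rw [soc, finrank_submodule_prod, finrank_top]

theorem constSocRank_iff_finrank_socKer {d : ℕ} :
    M.ConstSocRank d ↔
      ∃ c, ∀ U : Submodule k (Fin r → k), finrank k U = d → finrank k (M.socKer U) = c := by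
  simp only [ConstSocRank, finrank_soc]
  constructor
  · rintro ⟨c, hc⟩
    exact ⟨c - finrank k M.V2, fun U hU => Nat.eq_sub_of_add_eq (hc U hU)⟩
  · rintro ⟨c, hc⟩
    exact ⟨c + finrank k M.V2, fun U hU => by rw [hc U hU]⟩

end KRep

namespace XU

variable {U V : Submodule k (Fin r → k)} {M : KRep k r}

/-- The generator `1` of `(X_U)₁ = k`. As a representation, `X_U` is generated by this vector
subject only to the relations `x_u(1) = 0` for `u ∈ U`. -/
def gen (U : Submodule k (Fin r → k)) : (XU U).V1 := (1 : k)

theorem exists_smul_gen (m : (XU U).V1) : ∃ c : k, c • gen U = m :=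
  ⟨m, mul_one (M := k) m⟩

theorem evalX_gen (U : Submodule k (Fin r → k)) : (XU U).evalX (gen U) = U.mkQ :=
  pi_ext' fun i => LinearMap.ext_ring <|
    (KRep.evalX_single (gen U) i).trans (toSpanSingleton_apply_one k ((Fin r → k) ⧸ U) _)

theorem ker_evalX_gen (U : Submodule k (Fin r → k)) : ker ((XU U).evalX (gen U)) = U :=
  (congrArg ker (evalX_gen U)).trans U.ker_mkQ

theorem surjective_evalX_gen (U : Submodule k (Fin r → k)) :
    Function.Surjective ((XU U).evalX (gen U)) := by
  rw [evalX_gen]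
  exact U.mkQ_surjective

theorem gen_mem_socKer_iff : gen V ∈ (XU V).socKer U ↔ U ≤ V := by
  rw [KRep.mem_socKer_iff_le_ker_evalX, ker_evalX_gen]

theorem socKer_of_le (h : U ≤ V) : (XU V).socKer U = ⊤ := by
  refine eq_top_iff.2 fun m _ => ?_
  obtain ⟨c, rfl⟩ := exists_smul_gen m
  exact Submodule.smul_mem _ c (gen_mem_socKer_iff.2 h)

theorem socKer_of_not_le (h : ¬ U ≤ V) : (XU V).socKer U = ⊥ := by
  refine (Submodule.eq_bot_iff _).2 fun m hm => ?_
  obtain ⟨c, rfl⟩ := exists_smul_gen m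
  by_contra hne
  exact h (gen_mem_socKer_iff.1 ((Submodule.smul_mem_iff _ (left_ne_zero_of_smul hne)).1 hm))

theorem mem_KHom_iff {p : ((XU U).V1 →ₗ[k] M.V1) × ((XU U).V2 →ₗ[k] M.V2)} :
    p ∈ KHom (XU U) M ↔ p.2 ∘ₗ (XU U).evalX (gen U) = M.evalX (p.1 (gen U)) := by
  refine KRep.mem_KHom_iff.trans ⟨fun hp => hp _, fun hp m => ?_⟩
  obtain ⟨c, rfl⟩ := exists_smul_gen m
  rw [KRep.evalX_smul, comp_smul, hp, map_smul, KRep.evalX_smul]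

theorem hom_ext {p q : ((XU U).V1 →ₗ[k] M.V1) × ((XU U).V2 →ₗ[k] M.V2)}
    (hp : p ∈ KHom (XU U) M) (hq : q ∈ KHom (XU U) M) (h : p.1 (gen U) = q.1 (gen U)) :
    p = q := by
  refine Prod.ext (LinearMap.ext_ring h) ((cancel_right (surjective_evalX_gen U)).1 ?_)
  rw [mem_KHom_iff.1 hp, mem_KHom_iff.1 hq, h]

theorem exists_mem_KHom_apply_gen_eq {m : M.V1} (hm : m ∈ M.socKer U) :
    ∃ p ∈ KHom (XU U) M, p.1 (gen U) = m := by
  let f₁ : (XU U).V1 →ₗ[k] M.V1 := toSpanSingleton k M.V1 m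
  let f₂ : (XU U).V2 →ₗ[k] M.V2 := U.liftQ (M.evalX m) (KRep.mem_socKer_iff_le_ker_evalX.1 hm)
  have hf₁ : f₁ (gen U) = m := toSpanSingleton_apply_one k _ _
  have hf₂ : f₂ ∘ₗ (XU U).evalX (gen U) = M.evalX m :=
    (congrArg (f₂ ∘ₗ ·) (evalX_gen U)).trans (U.liftQ_mkQ _ _)
  exact ⟨(f₁, f₂), mem_KHom_iff.2 (by rw [hf₁, hf₂]), hf₁⟩

theorem apply_gen_mem_socKer {p : ((XU U).V1 →ₗ[k] M.V1) × ((XU U).V2 →ₗ[k] M.V2)}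
    (hp : p ∈ KHom (XU U) M) : p.1 (gen U) ∈ M.socKer U := by
  rw [KRep.mem_socKer_iff_le_ker_evalX, ← mem_KHom_iff.1 hp]
  exact (ker_evalX_gen U).ge.trans (ker_le_ker_comp _ p.2)

/-- The identification of `Hom(X_U, M)` with the `M₁`-part of `Soc_U(M)`, sending a morphism to
the image of the generator of `X_U`. -/
noncomputable def homEquivSocKer (U : Submodule k (Fin r → k)) (M : KRep k r) :
    KHom (XU U) M ≃ₗ[k] M.socKer U :=
  .ofBijective
    ((applyₗ (gen U) ∘ₗ fst k _ _ ∘ₗ (KHom (XU U) M).subtype).codRestrict (M.socKer U)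
      fun p => apply_gen_mem_socKer p.2)
    ⟨fun p q h => Subtype.ext (hom_ext p.2 q.2 (congrArg Subtype.val h)),
      fun m =>
        let ⟨p, hp, hpm⟩ := exists_mem_KHom_apply_gen_eq m.2
        ⟨⟨p, hp⟩, Subtype.ext hpm⟩⟩

theorem KHom_eq_bot_of_not_le (h : ¬ U ≤ V) : KHom (XU U) (XU V) = ⊥ := by
  rw [← Submodule.finrank_eq_zero, (homEquivSocKer U (XU V)).finrank_eq,
    socKer_of_not_le h, finrank_bot]

theorem constSocRank_of_finrank_lt {e : ℕ} (he : finrank k V < e) :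
    (XU V).ConstSocRank e := by
  refine KRep.constSocRank_iff_finrank_socKer.2 ⟨0, fun U hU => ?_⟩
  rw [socKer_of_not_le (not_le_of_finrank_lt (he.trans_eq hU.symm)), finrank_bot]

theorem not_constSocRank (hV : V ≠ ⊤) {d : ℕ} (hd : 1 ≤ d) (hdV : d ≤ finrank k V) :
    ¬ (XU V).ConstSocRank d := by
  rw [KRep.constSocRank_iff_finrank_socKer]
  rintro ⟨c, hc⟩
  obtain ⟨W, -, hWV, hW⟩ := exists_submodule_finrank_eq_of_le (bot_le : ⊥ ≤ V)
    ((finrank_bot k _).trans_le d.zero_le) hdV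
  obtain ⟨W', hW', hW'V⟩ :=
    exists_submodule_finrank_eq_not_le hV hd (hdV.trans V.finrank_le)
  have hc_one : 1 = c := calc
    1 = finrank k (XU V).V1 := (finrank_self k).symm
    _ = finrank k ((XU V).socKer W) := by rw [socKer_of_le hWV, finrank_top]
    _ = c := hc W hW
  have hc_zero : 0 = c := by rw [← hc W' hW', socKer_of_not_le hW'V, finrank_bot]
  exact one_ne_zero (hc_one.trans hc_zero.symm)

end XU

theorem KRep.constSocRank_iff_finrank_KHom {d : ℕ} {M : KRep k r} :
    M.ConstSocRank d ↔
      ∃ c, ∀ U : Submodule k (Fin r → k), finrank k U = d → finrank k (KHom (XU U) M) = c := by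
  simp only [constSocRank_iff_finrank_socKer, (XU.homEquivSocKer _ M).finrank_eq]

theorem XV_constSocRank_succ_not_d_general {V : Submodule k (Fin r → k)} {d e : ℕ}
    (hd : 1 ≤ d) (hdV : d ≤ finrank k V) (hVe : finrank k V < e) (hVr : finrank k V < r) :
    KRep.ConstSocRank e (XU V) ∧
    ¬ KRep.ConstSocRank d (XU V) ∧
    (∀ U : Submodule k (Fin r → k), finrank k U = e → KHom (XU U) (XU V) = ⊥) ∧
    ¬ (∃ c : ℕ, ∀ W : Submodule k (Fin r → k), finrank k W = d →
        finrank k (KHom (XU W) (XU V)) = c) := by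
  have hV : V ≠ ⊤ := by
    rintro rfl
    simp at hVr
  have hnot : ¬ (XU V).ConstSocRank d := XU.not_constSocRank hV hd hdV
  exact ⟨XU.constSocRank_of_finrank_lt hVe, hnot,
    fun U hU => XU.KHom_eq_bot_of_not_le (not_le_of_finrank_lt (hVe.trans_eq hU.symm)),
    KRep.constSocRank_iff_finrank_KHom.not.1 hnot⟩

/-- Let `r ≥ 3`, `1 ≤ d ≤ r − 2` and `V ∈ Gr_{d,r}`. Then `X_V` has
constant `(d+1)`-socle rank but not constant `d`-socle rank. In particular
`Hom(X_U, X_V) = 0` for every `U ∈ Gr_{d+1,r}`, while `dim_k Hom(X_W, X_V)` is not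
independent of `W ∈ Gr_{d,r}`. -/
theorem XV_constSocRank_succ_not_d (hr : 3 ≤ r) (d : ℕ) (hd : 1 ≤ d) (hdr : d + 2 ≤ r)
    (V : Submodule k (Fin r → k)) (hV : finrank k V = d) :
    KRep.ConstSocRank (d + 1) (XU V) ∧
    ¬ KRep.ConstSocRank d (XU V) ∧
    (∀ U : Submodule k (Fin r → k), finrank k U = d + 1 → KHom (XU U) (XU V) = ⊥) ∧
    ¬ (∃ c : ℕ, ∀ W : Submodule k (Fin r → k), finrank k W = d →
        finrank k (KHom (XU W) (XU V)) = c) := by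
  exact XV_constSocRank_succ_not_d_general hd hV.ge (by omega) (by omega)
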